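/- arXiv:2410.00045 — 8 statements merged into one kernel-verified Lean document; each statement's English description precedes it below -/
import Mathlib

section
/- Let k be a real number with k + 1 ≠ 0. Let ω ∈ M satisfy d ω = 0 and (d ∘ J + J ∘ d)(ω) = 0 (i.e. the Lie derivative L_{[Q,Q]} = [δ, ι_{[Q,Q]}] annihilates ω, the weak-BV condition), and suppose (d ∘ e + e ∘ d)(J ω) = (k+1) • J ω (i.e. J ω has ghost number k + 1). Then, setting H := e (J ω), one has d H = (k+1) • J ω; in particular J ω = d ((k+1)⁻¹ • H) lies in the image of d, i.e. [Q,Q] is Hamiltonian with Hamiltonian function (k+1)⁻¹ • H. (Paper: Lemma stating that on a weak BV manifold of degree k ≠ −1, [Q,Q] is Hamiltonian with respect to ω.) -/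
section CartanCalculus

variable {R M : Type*} [AddCommMonoid M]

/-- The Lie derivative along a vector field, by Cartan's formula `L = [d, ι]` with `d` the
differential and `ι` the contraction with the field. The field is taken to be even, so that the
graded commutator is `d ∘ ι + ι ∘ d`. -/
def cartanLieDerivative [Semiring R] [Module R M] (d ι : M →ₗ[R] M) : M →ₗ[R] M :=
  d ∘ₗ ι + ι ∘ₗ d

theorem cartanLieDerivative_apply_of_closed [Semiring R] [Module R M] {d : M →ₗ[R] M}
    (ι : M →ₗ[R] M) {α : M} (hα : d α = 0) : cartanLieDerivative d ι α = d (ι α) := by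
  simp [cartanLieDerivative, hα]

theorem eq_map_inv_smul_of_cartanLieDerivative_eq_smul [DivisionSemiring R] [Module R M]
    {d ι : M →ₗ[R] M} {c : R} (hc : c ≠ 0) {α : M} (hα : d α = 0)
    (h : cartanLieDerivative d ι α = c • α) : α = d (c⁻¹ • ι α) := by
  rw [map_smul, ← cartanLieDerivative_apply_of_closed ι hα, h, inv_smul_smul₀ hc]

theorem weakBV_QQ_hamiltonian_general [DivisionSemiring R] [Module R M] (d J e : M →ₗ[R] M)
    (k : R) (hk : k + 1 ≠ 0) (ω : M) (hω : d ω = 0)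
    (hweak : cartanLieDerivative d J ω = 0)
    (hgh : cartanLieDerivative d e (J ω) = (k + 1) • J ω) :
    d (e (J ω)) = (k + 1) • J ω ∧ J ω = d ((k + 1)⁻¹ • e (J ω)) := by
  have hJω : d (J ω) = 0 := (cartanLieDerivative_apply_of_closed J hω).symm.trans hweak
  exact ⟨(cartanLieDerivative_apply_of_closed e hJω).symm.trans hgh,
    eq_map_inv_smul_of_cartanLieDerivative_eq_smul hk hJω hgh⟩

end CartanCalculus

/-- On a weak BV manifold of degree `k ≠ -1`, the even vector field `[Q,Q]` is
Hamiltonian with respect to `ω`, with Hamiltonian function `(k+1)⁻¹ • H` where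
`H := e (J ω)`.  Here `d` models the de Rham differential `δ`, `J` models the
contraction `ι_{[Q,Q]}`, and `e` models the contraction with the Euler vector
field, whose Lie derivative `d ∘ e + e ∘ d` multiplies an element of ghost
number `n` by `n`. -/
theorem weakBV_QQ_hamiltonian
    {M : Type*} [AddCommGroup M] [Module ℝ M]
    (d J e : M →ₗ[ℝ] M)
    (hdd : d ∘ₗ d = 0)
    (k : ℝ) (hk : k + 1 ≠ 0)
    (ω : M)
    (hω : d ω = 0)
    (hweak : (d ∘ₗ J + J ∘ₗ d) ω = 0)
    (hgh : (d ∘ₗ e + e ∘ₗ d) (J ω) = (k + 1) • J ω) :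
    d (e (J ω)) = (k + 1) • J ω ∧ J ω = d ((k + 1)⁻¹ • e (J ω)) :=
  weakBV_QQ_hamiltonian_general d J e k hk ω hω hweak hgh
end

section
/- Let k be a real number with k + 1 ≠ 0. Let ω, S ∈ M with d ω = 0 and (L ∘ L)(ω) = 0, and define ᾱ := i ω − d S and ω̄ := d ᾱ. Suppose (d ∘ e + e ∘ d)(i ω̄) = (k+1) • i ω̄ (i.e. ι_Q ω̄ has ghost number k + 1). Then S̄ := (k+1)⁻¹ • e (i ω̄) satisfies d S̄ = i ω̄. Moreover S̄ is unique in the following sense: if S̄' also satisfies d S̄' = i ω̄, e (S̄ − S̄') = 0, and (d ∘ e + e ∘ d)(S̄ − S̄') = (k+1) • (S̄ − S̄'), then S̄' = S̄. (Paper: Lemma on existence and uniqueness of the boundary term S̄ with ι_Q ω̄ = δ S̄ for k ≠ −1.) -/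
/-!
Since `δω = 0` and `δ² = 0`, we have `ω̄ = δ ι_Q ω = -L_Q ω`, and `L_Q² ω = 0` says precisely that
`ι_Q ω̄` is closed. On closed elements the Cartan formula `L_E = δ ι_E + ι_E δ` reduces to `δ ι_E`,
so on those of nonzero ghost number `n` the map `n⁻¹ ι_E` gives a primitive. The difference of two
admissible boundary terms is closed and killed by `ι_E`, so it is `δ` of a zero primitive.
-/

section CartanCalculus

variable {R M : Type*} [Ring R] [AddCommGroup M] [Module R M] {d e : M →ₗ[R] M}

theorem commutator_comp_self_apply_of_map_eq_zero (hdd : d ∘ₗ d = 0) (i : M →ₗ[R] M) {ω : M}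
    (hω : d ω = 0) :
    ((i ∘ₗ d - d ∘ₗ i) ∘ₗ (i ∘ₗ d - d ∘ₗ i)) ω = d (i (d (i ω))) := by
  have hdd_apply (x : M) : d (d x) = 0 := LinearMap.congr_fun hdd x
  have hL : (i ∘ₗ d - d ∘ₗ i) ω = -d (i ω) := by simp [hω]
  rw [LinearMap.comp_apply, hL]
  simp [hdd_apply]

theorem map_inv_smul_of_anticommutator_apply_eq_smul {c : Rˣ} {x : M} (hx : d x = 0)
    (hc : (d ∘ₗ e + e ∘ₗ d) x = c • x) : d (c⁻¹ • e x) = x := by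
  have hde : d (e x) = c • x := by simpa [hx] using hc
  rw [LinearMap.map_smul_of_tower, hde, inv_smul_smul]

theorem eq_zero_of_anticommutator_apply_eq_smul {c : Rˣ} {x : M} (hdx : d x = 0) (hex : e x = 0)
    (hc : (d ∘ₗ e + e ∘ₗ d) x = c • x) : x = 0 := by
  simpa [hex] using (map_inv_smul_of_anticommutator_apply_eq_smul hdx hc).symm

end CartanCalculus

theorem boundary_action_exists_unique_general
    {R M : Type*} [Ring R] [AddCommGroup M] [Module R M]
    (d i e : M →ₗ[R] M)
    (hdd : d ∘ₗ d = 0)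
    (c : Rˣ)
    (ω S : M)
    (hω : d ω = 0)
    (L : M →ₗ[R] M) (hL : L = i ∘ₗ d - d ∘ₗ i)
    (hweak : (L ∘ₗ L) ω = 0)
    (α ωb : M) (hα : α = i ω - d S) (hωb : ωb = d α)
    (hgh : (d ∘ₗ e + e ∘ₗ d) (i ωb) = c • i ωb)
    (Sb : M) (hSb : Sb = c⁻¹ • e (i ωb)) :
    d Sb = i ωb ∧
      ∀ Sb' : M, d Sb' = i ωb → e (Sb - Sb') = 0 →
        (d ∘ₗ e + e ∘ₗ d) (Sb - Sb') = c • (Sb - Sb') → Sb' = Sb := by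
  have hωb_eq : ωb = d (i ω) := by
    rw [hωb, hα, map_sub, ← LinearMap.comp_apply d d, hdd, LinearMap.zero_apply, sub_zero]
  have hclosed : d (i ωb) = 0 := by
    rw [hωb_eq, ← commutator_comp_self_apply_of_map_eq_zero hdd i hω, ← hL, hweak]
  have hexact : d Sb = i ωb := by
    rw [hSb, map_inv_smul_of_anticommutator_apply_eq_smul hclosed hgh]
  refine ⟨hexact, fun Sb' hSb' he hdeg => ?_⟩
  have hdiff : d (Sb - Sb') = 0 := by rw [map_sub, hexact, hSb', sub_self]
  exact (sub_eq_zero.mp (eq_zero_of_anticommutator_apply_eq_smul hdiff he hdeg)).symm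

/-- Existence and uniqueness of the boundary term `S̄` with `ι_Q ω̄ = δ S̄` for
`k ≠ -1`.  Here `d` models `δ`, `i` models `ι_Q`, `L := i ∘ d - d ∘ i` models
`L_Q`, and `e` models the contraction with the Euler vector field, whose Lie
derivative `d ∘ e + e ∘ d` multiplies an element of ghost number `n` by `n`. -/
theorem boundary_action_exists_unique
    {M : Type*} [AddCommGroup M] [Module ℝ M]
    (d i e : M →ₗ[ℝ] M)
    (hdd : d ∘ₗ d = 0)
    (k : ℝ) (hk : k + 1 ≠ 0)
    (ω S : M)
    (hω : d ω = 0)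
    (L : M →ₗ[ℝ] M) (hL : L = i ∘ₗ d - d ∘ₗ i)
    (hweak : (L ∘ₗ L) ω = 0)
    (α ωb : M) (hα : α = i ω - d S) (hωb : ωb = d α)
    (hgh : (d ∘ₗ e + e ∘ₗ d) (i ωb) = (k + 1) • i ωb)
    (Sb : M) (hSb : Sb = (k + 1)⁻¹ • e (i ωb)) :
    d Sb = i ωb ∧
      ∀ Sb' : M, d Sb' = i ωb → e (Sb - Sb') = 0 →
        (d ∘ₗ e + e ∘ₗ d) (Sb - Sb') = (k + 1) • (Sb - Sb') → Sb' = Sb :=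
  boundary_action_exists_unique_general d i e hdd (Units.mk0 (k + 1) hk) ω S hω L hL hweak
    α ωb hα hωb hgh Sb hSb
end

section
/- Let ω, S, S̄, T ∈ M with d ω = 0 and i S = 0, define ᾱ := i ω − d S and ω̄ := d ᾱ, and assume d S̄ = i ω̄ (S̄ is the boundary term) and j ω = − 2 • d T ([Q,Q] is Hamiltonian with (1/2) ι_{[Q,Q]} ω = − δT, the fundamental assumption of boundary-compatible equivariant BV). Then d (L S) = d (2 • S̄ − i ᾱ + 2 • T). (Paper: Lemma δ L_Q S = δ(2 S̄ − ι_Q ᾱ + 2 T).) -/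
/-!
In the ring of endomorphisms, `L_Q = ⁅i, d⁆` and `ι_{[Q,Q]} = ⁅⁅i, d⁆, i⁆`. Expanding the double
commutator at a closed `ω` gives `ι_{[Q,Q]} ω = 2 ι_Q δ ι_Q ω - δ ι_Q ι_Q ω`, so `δ ι_Q ι_Q ω` is
twice `δ (S̄ + T)`. Substituting `δ S = ι_Q ω - ᾱ` into `δ L_Q S = δ ι_Q δ S` then finishes.
-/

section ModuleEnd

variable {R M : Type*} [Semiring R] [AddCommGroup M] [Module R M]

theorem lie_lie_self_apply (f g : Module.End R M) (x : M) :
    ⁅⁅f, g⁆, f⁆ x = 2 • f (g (f x)) - g (f (f x)) - f (f (g x)) := by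
  simp only [Ring.lie_def, LinearMap.sub_apply, Module.End.mul_apply, map_sub]
  abel

theorem apply_apply_eq_zero_of_mul_self_eq_zero {g : Module.End R M} (hg : g * g = 0) (x : M) :
    g (g x) = 0 :=
  LinearMap.congr_fun hg x

theorem apply_lie_apply_of_mul_self_eq_zero (f : Module.End R M) {g : Module.End R M}
    (hg : g * g = 0) (x : M) : g (⁅f, g⁆ x) = g (f (g x)) := by
  rw [Ring.lie_def, LinearMap.sub_apply, Module.End.mul_apply, Module.End.mul_apply, map_sub,
    apply_apply_eq_zero_of_mul_self_eq_zero hg, sub_zero]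

theorem delta_LQ_S_general (d i : Module.End R M) (hdd : d * d = 0) {ω S Sb T α : M}
    (hω : d ω = 0) (hα : α = i ω - d S) (hSb : d Sb = i (d α))
    (hT : ⁅⁅i, d⁆, i⁆ ω = -(2 • d T)) :
    d (⁅i, d⁆ S) = d (2 • Sb - i α + 2 • T) := by
  have d_α : d α = d (i ω) := by
    rw [hα, map_sub, apply_apply_eq_zero_of_mul_self_eq_zero hdd, sub_zero]
  have d_i_i_ω : d (i (i ω)) = 2 • d Sb + 2 • d T := calc
    d (i (i ω)) = 2 • d Sb - ⁅⁅i, d⁆, i⁆ ω := by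
      rw [lie_lie_self_apply, hω, map_zero, map_zero, sub_zero, hSb, d_α, sub_sub_cancel]
    _ = 2 • d Sb + 2 • d T := by rw [hT, sub_neg_eq_add]
  have d_S : d S = i ω - α := by rw [hα, sub_sub_cancel]
  calc
    d (⁅i, d⁆ S) = d (i (d S)) := apply_lie_apply_of_mul_self_eq_zero i hdd S
    _ = d (i (i ω)) - d (i α) := by rw [d_S, map_sub, map_sub]
    _ = 2 • d Sb + 2 • d T - d (i α) := by rw [d_i_i_ω]
    _ = d (2 • Sb - i α + 2 • T) := by
      rw [map_add, map_sub, map_nsmul, map_nsmul, add_sub_right_comm]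

end ModuleEnd

/-- Lemma `δ L_Q S = δ(2 S̄ - ι_Q ᾱ + 2 T)`.  Here `d` models `δ`, `i` models
`ι_Q`, `L := i ∘ d - d ∘ i` models `L_Q`, `j := L ∘ i - i ∘ L` models
`ι_{[Q,Q]}`; `ᾱ := ι_Q ω - δ S` and `ω̄ := δ ᾱ`, the boundary term `S̄`
satisfies `δ S̄ = ι_Q ω̄`, and `[Q,Q]` is Hamiltonian: `ι_{[Q,Q]} ω = -2 δ T`. -/
theorem delta_LQ_S
    {M : Type*} [AddCommGroup M] [Module ℝ M]
    (d i : M →ₗ[ℝ] M)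
    (hdd : d ∘ₗ d = 0)
    (ω S Sb T : M)
    (hω : d ω = 0)
    (hiS : i S = 0)
    (L : M →ₗ[ℝ] M) (hL : L = i ∘ₗ d - d ∘ₗ i)
    (j : M →ₗ[ℝ] M) (hj : j = L ∘ₗ i - i ∘ₗ L)
    (α ωb : M) (hα : α = i ω - d S) (hωb : ωb = d α)
    (hSb : d Sb = i ωb)
    (hT : j ω = - (2 : ℝ) • d T) :
    d (L S) = d (2 • Sb - i α + 2 • T) := by
  subst hL hj hωb
  refine delta_LQ_S_general d i hdd hω hα hSb (hT.trans ?_)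
  rw [neg_smul, ofNat_smul_eq_nsmul]
end

section
/- Let ω, S, S̄, T ∈ M with d ω = 0 and i S = 0, define ᾱ := i ω − d S and ω̄ := d ᾱ, and assume d S̄ = i ω̄ and j ω = − 2 • d T. Then d (i (i ω)) = 2 • d (S̄ + T). (Paper: Lemma δ((1/2) ι_Q ι_Q ω) = δ(S̄ + T).) -/
/-!
Expanding the double commutator gives
`ι_{[Q,Q]} = 2 ι_Q δ ι_Q - δ ι_Q ι_Q - ι_Q ι_Q δ`. On the closed
form `ω` the last term vanishes, and since `δ ᾱ = δ ι_Q ω`, the first one is `2 δ S̄`.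
Equating the result with `-2 δ T` and solving for `δ ι_Q ι_Q ω` gives the claim.
-/

theorem lie_lie_self_eq_two_mul_sub_sub {A : Type*} [Ring A] (a b : A) :
    ⁅⁅a, b⁆, a⁆ = 2 * (a * b * a) - b * a * a - a * a * b := by
  simp only [Ring.lie_def]
  noncomm_ring

section CartanCalculus

variable {R M : Type*} [Ring R] [AddCommGroup M] [Module R M] {d i : Module.End R M} {ω : M}

theorem lie_lie_self_apply_of_apply_eq_zero (hω : d ω = 0) :
    ⁅⁅i, d⁆, i⁆ ω = 2 • i (d (i ω)) - d (i (i ω)) := by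
  simp [lie_lie_self_eq_two_mul_sub_sub, hω, two_smul, two_mul]

-- `⁅i, d⁆` is `L_Q` and `⁅⁅i, d⁆, i⁆` is `ι_{[Q,Q]}`.
theorem delta_iQ_iQ_omega_general {S Sb T : M} (hdd : d * d = 0) (hω : d ω = 0)
    (hSb : d Sb = i (d (i ω - d S))) (hT : ⁅⁅i, d⁆, i⁆ ω = -(2 : R) • d T) :
    d (i (i ω)) = 2 • d (Sb + T) := by
  have hddS : d (d S) = 0 := LinearMap.congr_fun hdd S
  have hidi : i (d (i ω)) = d Sb := by rw [hSb, map_sub, hddS, sub_zero]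
  calc
    d (i (i ω)) = 2 • i (d (i ω)) - ⁅⁅i, d⁆, i⁆ ω := by
      rw [lie_lie_self_apply_of_apply_eq_zero hω, sub_sub_cancel]
    _ = 2 • d Sb - -(2 : R) • d T := by rw [hidi, hT]
    _ = 2 • d (Sb + T) := by
      rw [neg_smul, sub_neg_eq_add, ofNat_smul_eq_nsmul R, map_add, smul_add]

end CartanCalculus

/-- Lemma `δ((1/2) ι_Q ι_Q ω) = δ(S̄ + T)`.  Here `d` models `δ`, `i` models
`ι_Q`, `L := i ∘ d - d ∘ i` models `L_Q`, `j := L ∘ i - i ∘ L` models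
`ι_{[Q,Q]}`; `ᾱ := ι_Q ω - δ S` and `ω̄ := δ ᾱ`, the boundary term `S̄`
satisfies `δ S̄ = ι_Q ω̄`, and `[Q,Q]` is Hamiltonian: `ι_{[Q,Q]} ω = -2 δ T`. -/
theorem delta_iQ_iQ_omega
    {M : Type*} [AddCommGroup M] [Module ℝ M]
    (d i : M →ₗ[ℝ] M)
    (hdd : d ∘ₗ d = 0)
    (ω S Sb T : M)
    (hω : d ω = 0)
    (hiS : i S = 0)
    (L : M →ₗ[ℝ] M) (hL : L = i ∘ₗ d - d ∘ₗ i)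
    (j : M →ₗ[ℝ] M) (hj : j = L ∘ₗ i - i ∘ₗ L)
    (α ωb : M) (hα : α = i ω - d S) (hωb : ωb = d α)
    (hSb : d Sb = i ωb)
    (hT : j ω = - (2 : ℝ) • d T) :
    d (i (i ω)) = 2 • d (Sb + T) := by
  subst hL hj hα hωb
  exact delta_iQ_iQ_omega_general hdd hω hSb hT
end

section
/- Let k be a real number with k + 1 ≠ 0. Let ω, S, S̄, T ∈ M with d ω = 0 and i S = 0, define ᾱ := i ω − d S and ω̄ := d ᾱ, and assume d S̄ = i ω̄ and j ω = − 2 • d T. Suppose the element g := (1/2) • i (i ω) − S̄ − T satisfies e g = 0 and (d ∘ e + e ∘ d)(g) = (k+1) • g (i.e. g is a function of ghost number k + 1). Then (1/2) • i (i ω) = S̄ + T; equivalently (1/2) ι_Q ι_Q ω − T = S̄, exhibiting the boundary term S̄ as the modification of the equivariant CME (1/2) ι_Q ι_Q ω = T. (Paper: Theorem (1/2) ι_Q ι_Q ω = S̄ + T for k ≠ −1.) -/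
/-!
In `End M` the operators `L_Q` and `ι_{[Q,Q]}` are the commutators `⁅i, d⁆` and `⁅⁅i, d⁆, i⁆`.
Expanding the latter at `ω` with `d ω = 0` gives `d (½ i i ω) = i d i ω - ½ ι_{[Q,Q]} ω`, and the
two terms on the right are `d S̄` and `d T`. So `g = ½ i i ω - S̄ - T` is closed, and Cartan's
formula for the Euler vector field yields `(k + 1) g = d (e g)`, which vanishes because `g` is a
function.
-/

section CartanCalculus

variable {R M : Type*} [Ring R] [AddCommGroup M] [Module R M]

theorem lie_lie_self_apply_of_map_eq_zero {d : Module.End R M} (i : Module.End R M) {ω : M}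
    (hω : d ω = 0) :
    ⁅⁅i, d⁆, i⁆ ω = (2 : R) • i (d (i ω)) - d (i (i ω)) := by
  simp only [Ring.lie_def, LinearMap.sub_apply, Module.End.mul_apply, hω, map_zero, map_sub,
    two_smul]
  abel

theorem map_invOf_two_smul_apply_apply [Invertible (2 : R)] {d : Module.End R M}
    (i : Module.End R M) {ω : M} (hω : d ω = 0) :
    d (⅟(2 : R) • i (i ω)) = i (d (i ω)) - ⅟(2 : R) • ⁅⁅i, d⁆, i⁆ ω := by
  rw [lie_lie_self_apply_of_map_eq_zero i hω, smul_sub, invOf_smul_smul, sub_sub_cancel, map_smul]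

theorem comp_add_comp_apply_of_map_eq_zero {d : Module.End R M} (e : Module.End R M) {g : M}
    (hg : d g = 0) : (d ∘ₗ e + e ∘ₗ d) g = d (e g) := by
  rw [LinearMap.add_apply, LinearMap.comp_apply, LinearMap.comp_apply, hg, map_zero, add_zero]

theorem half_iQ_iQ_omega_eq_general [Invertible (2 : R)] (d i e : Module.End R M)
    (hdd : d ∘ₗ d = 0) {k : R} (hk : IsSMulRegular M (k + 1)) {ω S Sb T : M}
    (hω : d ω = 0)
    (hSb : d Sb = i (d (i ω - d S)))
    (hT : ⁅⁅i, d⁆, i⁆ ω = -(2 : R) • d T)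
    (hfun : e (⅟(2 : R) • i (i ω) - Sb - T) = 0)
    (hgh : (d ∘ₗ e + e ∘ₗ d) (⅟(2 : R) • i (i ω) - Sb - T) =
      (k + 1) • (⅟(2 : R) • i (i ω) - Sb - T)) :
    ⅟(2 : R) • i (i ω) = Sb + T := by
  have hdSb : d Sb = i (d (i ω)) := by
    rw [hSb, map_sub d, ← LinearMap.comp_apply d d, hdd, LinearMap.zero_apply, sub_zero]
  have hdT : ⅟(2 : R) • ⁅⁅i, d⁆, i⁆ ω = -d T := by
    rw [hT, neg_smul, smul_neg, invOf_smul_smul]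
  have hclosed : d (⅟(2 : R) • i (i ω) - Sb - T) = 0 := by
    rw [map_sub, map_sub, map_invOf_two_smul_apply_apply i hω, hdSb, hdT]
    abel
  have hzero : ⅟(2 : R) • i (i ω) - Sb - T = 0 :=
    hk.right_eq_zero_of_smul <| by
      rw [← hgh, comp_add_comp_apply_of_map_eq_zero e hclosed, hfun, map_zero]
  rwa [sub_sub, sub_eq_zero] at hzero

end CartanCalculus

/-- Theorem `(1/2) ι_Q ι_Q ω = S̄ + T` for `k ≠ -1`: the boundary term `S̄` is
the modification of the equivariant CME `(1/2) ι_Q ι_Q ω = T`.  Here `d` models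
`δ`, `i` models `ι_Q`, `L := i ∘ d - d ∘ i` models `L_Q`,
`j := L ∘ i - i ∘ L` models `ι_{[Q,Q]}`, and `e` models the contraction with
the Euler vector field. -/
theorem half_iQ_iQ_omega_eq
    {M : Type*} [AddCommGroup M] [Module ℝ M]
    (d i e : M →ₗ[ℝ] M)
    (hdd : d ∘ₗ d = 0)
    (k : ℝ) (hk : k + 1 ≠ 0)
    (ω S Sb T : M)
    (hω : d ω = 0)
    (hiS : i S = 0)
    (L : M →ₗ[ℝ] M) (hL : L = i ∘ₗ d - d ∘ₗ i)
    (j : M →ₗ[ℝ] M) (hj : j = L ∘ₗ i - i ∘ₗ L)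
    (α ωb : M) (hα : α = i ω - d S) (hωb : ωb = d α)
    (hSb : d Sb = i ωb)
    (hT : j ω = - (2 : ℝ) • d T)
    (g : M) (hg : g = (1 / 2 : ℝ) • i (i ω) - Sb - T)
    (hfun : e g = 0)
    (hgh : (d ∘ₗ e + e ∘ₗ d) g = (k + 1) • g) :
    (1 / 2 : ℝ) • i (i ω) = Sb + T := by
  subst hL hj hα hωb hg
  simp only [one_div, ← invOf_eq_inv] at hfun hgh ⊢
  exact half_iQ_iQ_omega_eq_general d i e hdd (.of_ne_zero hk) hω hSb hT hfun hgh
end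

section
/- Let ω, S, S̄, T ∈ M with d ω = 0, i S = 0, i S̄ = 0 and i T = 0, define ᾱ := i ω − d S and ω̄ := d ᾱ, and assume: d S̄ = i ω̄; j ω = − 2 • d T; i ∘ j = j ∘ i (modeling the vanishing of the bracket [ι_Q, ι_{[Q,Q]}] = ι_{[Q,[Q,Q]]} = 0); and i (i ω) = 2 • (S̄ + T). Then L S̄ = − 2 • L T, i.e. (1/2) L_Q S̄ = − L_Q T. (Paper: Proposition (1/2) L_Q S̄ = − L_Q T.) -/
/-!
The bracket `[i, [[i, d], i]]` is, up to sign, the third iterated commutator of `i` with `d`, whose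
coefficients are `1, -3, 3, -1`. At a closed `ω` with `i³ ω = 0` the two outer terms vanish, so if
the bracket is zero, cancelling `3` leaves `i² d i ω = i d i² ω`. Since `i d i ω = d S̄` and
`i² ω = 2 (S̄ + T)`, this reads `i d S̄ = 2 i d (S̄ + T)`, and on functions `i d` is the Lie
derivative.
-/

theorem lie_lie_lie_self_eq {A : Type*} [Ring A] (a b : A) :
    ⁅a, ⁅⁅a, b⁆, a⁆⁆ = b * a ^ 3 - a ^ 3 * b + 3 * (a ^ 2 * b * a - a * b * a ^ 2) := by
  simp only [Ring.lie_def]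
  noncomm_ring

section LinearEndomorphisms

variable {R M : Type*} [Ring R] [AddCommGroup M] [Module R M] {d i : M →ₗ[R] M}

theorem lie_apply_of_apply_eq_zero {x : M} (hx : i x = 0) : ⁅i, d⁆ x = i (d x) := by
  simp [Ring.lie_def, hx]

theorem lie_lie_lie_self_apply_of_apply_eq_zero {ω : M} (hω : d ω = 0) (hiii : i (i (i ω)) = 0) :
    ⁅i, ⁅⁅i, d⁆, i⁆⁆ ω = (3 : R) • (i (i (d (i ω))) - i (d (i (i ω)))) := by
  rw [lie_lie_lie_self_eq, ofNat_smul_eq_nsmul]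
  simp [pow_succ, hω, hiii]

theorem half_LQ_Sb_eq_neg_LQ_T_general (h3 : IsSMulRegular M (3 : R))
    (hdd : d ∘ₗ d = 0) {ω S Sb T : M} (hω : d ω = 0) (hiSb : i Sb = 0) (hiT : i T = 0)
    (hSb : d Sb = i (d (i ω - d S))) (hcomm : ⁅i, ⁅⁅i, d⁆, i⁆⁆ = 0)
    (hCME : i (i ω) = (2 : R) • (Sb + T)) :
    ⁅i, d⁆ Sb = -(2 : R) • ⁅i, d⁆ T := by
  have hidi : i (d (i ω)) = d Sb := by
    rw [hSb, map_sub, ← LinearMap.comp_apply d d, hdd, LinearMap.zero_apply, sub_zero]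
  have hiii : i (i (i ω)) = 0 := by simp [hCME, hiSb, hiT]
  have hswap : i (i (d (i ω))) = i (d (i (i ω))) := by
    refine sub_eq_zero.mp (h3.right_eq_zero_of_smul ?_)
    rw [← lie_lie_lie_self_apply_of_apply_eq_zero hω hiii, hcomm, LinearMap.zero_apply]
  have hidSb : i (d Sb) = (2 : R) • (i (d Sb) + i (d T)) := by
    simpa only [hidi, hCME, map_smul, map_add] using hswap
  rw [lie_apply_of_apply_eq_zero hiSb, lie_apply_of_apply_eq_zero hiT]
  simp only [neg_smul, two_smul] at hidSb ⊢
  linear_combination (norm := abel) -hidSb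

end LinearEndomorphisms

/-- Proposition `(1/2) L_Q S̄ = - L_Q T`, i.e. `L_Q S̄ = -2 L_Q T`.  Here `d`
models `δ`, `i` models `ι_Q`, `L := i ∘ d - d ∘ i` models `L_Q`,
`j := L ∘ i - i ∘ L` models `ι_{[Q,Q]}`; `ᾱ := ι_Q ω - δ S`, `ω̄ := δ ᾱ`,
`δ S̄ = ι_Q ω̄`, `ι_{[Q,Q]} ω = -2 δ T`, `[ι_Q, ι_{[Q,Q]}] = 0`, and
`ι_Q ι_Q ω = 2 (S̄ + T)`. -/
theorem half_LQ_Sb_eq_neg_LQ_T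
    {M : Type*} [AddCommGroup M] [Module ℝ M]
    (d i : M →ₗ[ℝ] M)
    (hdd : d ∘ₗ d = 0)
    (ω S Sb T : M)
    (hω : d ω = 0)
    (hiS : i S = 0)
    (hiSb : i Sb = 0)
    (hiT : i T = 0)
    (L : M →ₗ[ℝ] M) (hL : L = i ∘ₗ d - d ∘ₗ i)
    (j : M →ₗ[ℝ] M) (hj : j = L ∘ₗ i - i ∘ₗ L)
    (α ωb : M) (hα : α = i ω - d S) (hωb : ωb = d α)
    (hSb : d Sb = i ωb)
    (hT : j ω = - (2 : ℝ) • d T)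
    (hcomm : i ∘ₗ j = j ∘ₗ i)
    (hCME : i (i ω) = (2 : ℝ) • (Sb + T)) :
    L Sb = - (2 : ℝ) • L T := by
  subst hL hj hα hωb
  exact half_LQ_Sb_eq_neg_LQ_T_general ((IsUnit.mk0 3 three_ne_zero).isSMulRegular M)
    hdd hω hiSb hiT hSb (sub_eq_zero.mpr hcomm) hCME
end

section
/- Let ω̄, S̄, T ∈ M and assume L ω̄ = 0, d S̄ = i ω̄, and L S̄ = − 2 • L T. Define T̄ := − L T. Then (1/2) • j ω̄ = − d T̄, i.e. (1/2) ι_{[Q,Q]} ω̄ = − δ T̄, the pre-boundary version of the equivariant master equation. (Paper: Lemma (1/2) ι_{[Q,Q]} ω̄ = − δ T̄, where T̄ := − L_Q T satisfies the boundary BFV equivariant CME (1/2) L_Q S̄ = T̄.) -/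
section

variable {R M : Type*} [Semiring R] [AddCommGroup M] [Module R M] {d i L : M →ₗ[R] M}

theorem lieDerivative_comp_differential (hdd : d ∘ₗ d = 0) :
    (i ∘ₗ d - d ∘ₗ i) ∘ₗ d = -(d ∘ₗ (i ∘ₗ d - d ∘ₗ i)) := by
  have hd (x : M) : d (d x) = 0 := LinearMap.congr_fun hdd x
  ext x
  calc i (d (d x)) - d (i (d x))
    _ = -(d (i (d x)) - d (d (i x))) := by rw [hd, hd, map_zero, zero_sub, sub_zero]
    _ = -d (i (d x) - d (i x)) := by rw [map_sub]

theorem bracketContraction_apply_eq_neg_differential (hLd : L ∘ₗ d = -(d ∘ₗ L))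
    {ω S : M} (hLω : L ω = 0) (hS : d S = i ω) :
    (L ∘ₗ i - i ∘ₗ L) ω = -d (L S) :=
  calc L (i ω) - i (L ω)
    _ = L (d S) := by rw [hLω, map_zero, sub_zero, hS]
    _ = -d (L S) := LinearMap.congr_fun hLd S

end

theorem preboundary_equivariant_master_equation_general
    {R M : Type*} [Ring R] [AddCommGroup M] [Module R M]
    (d i : M →ₗ[R] M)
    (hdd : d ∘ₗ d = 0)
    (L : M →ₗ[R] M) (hL : L = i ∘ₗ d - d ∘ₗ i)
    (j : M →ₗ[R] M) (hj : j = L ∘ₗ i - i ∘ₗ L)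
    (ωb Sb T : M)
    (hLωb : L ωb = 0)
    (hSb : d Sb = i ωb)
    (hLSb : L Sb = -(2 : R) • L T)
    (Tb : M) (hTb : Tb = -L T) :
    j ωb = -(2 : R) • d Tb := by
  have hLd : L ∘ₗ d = -(d ∘ₗ L) := hL ▸ lieDerivative_comp_differential hdd
  have hLSb_eq : L Sb = (2 : R) • Tb := by rw [hLSb, hTb, smul_neg, neg_smul]
  calc j ωb
    _ = -d (L Sb) := hj ▸ bracketContraction_apply_eq_neg_differential hLd hLωb hSb
    _ = -(2 : R) • d Tb := by rw [hLSb_eq, map_smul, neg_smul]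

/-- Lemma `(1/2) ι_{[Q,Q]} ω̄ = - δ T̄`, the pre-boundary version of the
equivariant master equation, with `T̄ := - L_Q T`.  Here `d` models `δ`, `i`
models `ι_Q`, `L := i ∘ d - d ∘ i` models `L_Q`, and `j := L ∘ i - i ∘ L`
models `ι_{[Q,Q]}`. -/
theorem preboundary_equivariant_master_equation
    {M : Type*} [AddCommGroup M] [Module ℝ M]
    (d i : M →ₗ[ℝ] M)
    (hdd : d ∘ₗ d = 0)
    (L : M →ₗ[ℝ] M) (hL : L = i ∘ₗ d - d ∘ₗ i)
    (j : M →ₗ[ℝ] M) (hj : j = L ∘ₗ i - i ∘ₗ L)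
    (ωb Sb T : M)
    (hLωb : L ωb = 0)
    (hSb : d Sb = i ωb)
    (hLSb : L Sb = - (2 : ℝ) • L T)
    (Tb : M) (hTb : Tb = - L T) :
    (1 / 2 : ℝ) • j ωb = - d Tb := by
  rw [preboundary_equivariant_master_equation_general d i hdd L hL j hj ωb Sb T
    hLωb hSb hLSb Tb hTb]
  module
end

section
/- Let ω, S, A, B ∈ M with d ω = 0 and i S = 0. Assume: L ∘ i = i ∘ L (i.e. j = ι_{[Q,Q]} = 0, modeling that Q is cohomological, Q² = 0); i ω = d S + A (the BV-BFV relation ι_Q ω = δS + π*α^∂ with A modeling the pulled-back boundary one-form π*α^∂); and d B = i (d A) (B models π*S^∂, via the BFV relation δ S^∂ = ι_{Q^∂} ω^∂ pulled back along π). Suppose moreover that the element g' := (1/2) • i (i ω) − B satisfies e g' = 0 and (d ∘ e + e ∘ d)(g') = g' (g' is a function of ghost number 1). Then (1/2) • i (i ω) = B, i.e. (1/2) ι_Q ι_Q ω = π* S^∂. (Paper: equation (e:mCME2), proved in Section 2.) -/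
/-!
For closed `ω` we have `L_Q ω = -δ ι_Q ω`, so `[L_Q, ι_Q] = 0` gives `δ ι_Q ι_Q ω = 2 ι_Q δ ι_Q ω`.
As `ι_Q ω` and `π*α^∂` differ by an exact form, `(1/2) ι_Q ι_Q ω` has the same differential as
`π*S^∂`. Their difference is thus a closed function, which `L_E = δ ι_E + ι_E δ` annihilates;
as `L_E` also multiplies it by its nonzero ghost number, it vanishes.
-/

section CartanCalculus

variable {R M : Type*} [Semiring R] [AddCommGroup M] [Module R M]

/-- The Lie derivative `L_Q = ι_Q δ - δ ι_Q` along an odd vector field `Q`, where `d` models the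
differential `δ` and `i` the contraction `ι_Q`. The minus sign is the graded commutator sign: `ι_Q`
is an even operator. -/
def oddLieDerivative (d i : M →ₗ[R] M) : M →ₗ[R] M := i ∘ₗ d - d ∘ₗ i

/-- The Lie derivative `L_E = δ ι_E + ι_E δ` along an even vector field `E`, such as the Euler
vector field generating the ghost grading, where `d` models the differential `δ` and `e` the
contraction `ι_E`. -/
def evenLieDerivative (d e : M →ₗ[R] M) : M →ₗ[R] M := d ∘ₗ e + e ∘ₗ d

theorem oddLieDerivative_apply (d i : M →ₗ[R] M) (x : M) :
    oddLieDerivative d i x = i (d x) - d (i x) := rfl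

theorem evenLieDerivative_apply (d e : M →ₗ[R] M) (x : M) :
    evenLieDerivative d e x = d (e x) + e (d x) := rfl

variable {d i e : M →ₗ[R] M}

theorem oddLieDerivative_apply_of_closed {ω : M} (hω : d ω = 0) :
    oddLieDerivative d i ω = -d (i ω) := by
  rw [oddLieDerivative_apply, hω, map_zero, zero_sub]

theorem differential_contraction_contraction_of_closed {ω : M} (hω : d ω = 0)
    (hcoh : oddLieDerivative d i ∘ₗ i = i ∘ₗ oddLieDerivative d i) :
    d (i (i ω)) = (2 : R) • i (d (i ω)) := by
  have hcomm : i (d (i ω)) - d (i (i ω)) = -i (d (i ω)) := calc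
    i (d (i ω)) - d (i (i ω)) = oddLieDerivative d i (i ω) := rfl
    _ = i (oddLieDerivative d i ω) := LinearMap.congr_fun hcoh ω
    _ = -i (d (i ω)) := by rw [oddLieDerivative_apply_of_closed hω, map_neg]
  rw [two_smul, ← sub_eq_iff_eq_add, ← neg_sub, hcomm, neg_neg]

theorem differential_half_contraction_contraction_of_closed [Invertible (2 : R)] {ω : M}
    (hω : d ω = 0) (hcoh : oddLieDerivative d i ∘ₗ i = i ∘ₗ oddLieDerivative d i) :
    d (⅟(2 : R) • i (i ω)) = i (d (i ω)) := by
  rw [map_smul, differential_contraction_contraction_of_closed hω hcoh, invOf_smul_smul]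

theorem differential_exact_add (hdd : d ∘ₗ d = 0) (x y : M) : d (d x + y) = d y := by
  rw [map_add, ← LinearMap.comp_apply, hdd, LinearMap.zero_apply, zero_add]

theorem evenLieDerivative_eq_zero {x : M} (hd : d x = 0) (he : e x = 0) :
    evenLieDerivative d e x = 0 := by
  rw [evenLieDerivative_apply, hd, he, map_zero, map_zero, add_zero]

theorem eq_zero_of_evenLieDerivative_eq_smul {n : R} (hn : IsSMulRegular M n) {x : M}
    (hd : d x = 0) (he : e x = 0) (hx : evenLieDerivative d e x = n • x) : x = 0 :=
  hn.right_eq_zero_of_smul (hx.symm.trans (evenLieDerivative_eq_zero hd he))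

theorem half_iQ_iQ_omega_boundary_general [Invertible (2 : R)] (hdd : d ∘ₗ d = 0)
    {ω S A B : M} (hω : d ω = 0)
    (hcoh : oddLieDerivative d i ∘ₗ i = i ∘ₗ oddLieDerivative d i)
    (hBVBFV : i ω = d S + A) (hB : d B = i (d A))
    {n : R} (hn : IsSMulRegular M n)
    (hfun : e (⅟(2 : R) • i (i ω) - B) = 0)
    (hgh : evenLieDerivative d e (⅟(2 : R) • i (i ω) - B) = n • (⅟(2 : R) • i (i ω) - B)) :
    ⅟(2 : R) • i (i ω) = B := by
  have hdiff : d (⅟(2 : R) • i (i ω)) = d B := by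
    rw [differential_half_contraction_contraction_of_closed hω hcoh, hBVBFV,
      differential_exact_add hdd, hB]
  have hclosed : d (⅟(2 : R) • i (i ω) - B) = 0 := by rw [map_sub, hdiff, sub_self]
  exact sub_eq_zero.mp (eq_zero_of_evenLieDerivative_eq_smul hn hclosed hfun hgh)

end CartanCalculus

/-- The relation `(1/2) ι_Q ι_Q ω = π* S^∂`.  Here `d` models `δ`, `i` models
`ι_Q`, `L := i ∘ d - d ∘ i` models `L_Q`, `Q` is cohomological
(`L ∘ i = i ∘ L`, i.e. `ι_{[Q,Q]} = 0`), `A` models the pulled-back boundary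
one-form `π* α^∂` in `ι_Q ω = δ S + π* α^∂`, `B` models `π* S^∂` via
`δ B = ι_Q (δ A)`, and `e` models the contraction with the Euler vector
field. -/
theorem half_iQ_iQ_omega_boundary
    {M : Type*} [AddCommGroup M] [Module ℝ M]
    (d i e : M →ₗ[ℝ] M)
    (hdd : d ∘ₗ d = 0)
    (ω S A B : M)
    (hω : d ω = 0)
    (hiS : i S = 0)
    (L : M →ₗ[ℝ] M) (hL : L = i ∘ₗ d - d ∘ₗ i)
    (hcoh : L ∘ₗ i = i ∘ₗ L)
    (hBVBFV : i ω = d S + A)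
    (hB : d B = i (d A))
    (g' : M) (hg' : g' = (1 / 2 : ℝ) • i (i ω) - B)
    (hfun : e g' = 0)
    (hgh : (d ∘ₗ e + e ∘ₗ d) g' = g') :
    (1 / 2 : ℝ) • i (i ω) = B := by
  subst hL hg'
  rw [one_div, ← invOf_eq_inv] at hfun hgh ⊢
  exact half_iQ_iQ_omega_boundary_general hdd hω hcoh hBVBFV hB (.one M)
    hfun (hgh.trans (one_smul ℝ _).symm)
end
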